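/- ∫₀¹ (x²/(1+x)) · ( ∫₀ˣ log(y)/(y−1) dy ) dx = ( −4·log(2)·(π²/6) + 8·ζ(3) − 3 )/8, where ζ(3) = Σ_{k=1}^{∞} 1/k³. -/

import Mathlib

open MeasureTheory Real

/-!
Integrating by parts against the antiderivative `(x - 1)² / 2 + log (1 + x)` of `x² / (1 + x)`
reduces the double integral to elementary moments of `log` and to
`J = ∫₀¹ log (1 + y) log y / (y - 1) dy`.

Write `a = log (1 - x)` and `b = log (1 + x)`. The involution `y = (1 - x) / (1 + x)` of `(0, 1)`
turns `dx / x` into `dy / (1 - y) + dy / (1 + y)`, so it carries `J`, up to an integral over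
`dy / (1 + y)` which integrates by parts to `∫ b² / x`, into a combination of `∫ (b - a) / x`,
`∫ b² / x` and `∫ a b / x`. The last two come from the squares: `∫ a² / x` is a geometric series
integral, `∫ (a + b)² / x` is half of it by `x ↦ x²`, and `∫ (b - a)² / x` is another image
of the involution.
-/

open Set

/-- The value `ζ(s)` of the Riemann zeta function at a natural number `s ≥ 2`, as a real number.
The index is shifted so that the sum runs over all of `ℕ`. -/
noncomputable def zetaSeries (s : ℕ) : ℝ := ∑' n : ℕ, 1 / ((n : ℝ) + 1) ^ s

lemma summable_zetaSeries {s : ℕ} (hs : 1 < s) : Summable fun n : ℕ => 1 / ((n : ℝ) + 1) ^ s := by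
  simpa using (summable_nat_add_iff 1).2 (summable_one_div_nat_pow.2 hs)

lemma zetaSeries_pos {s : ℕ} (hs : 1 < s) : 0 < zetaSeries s :=
  (summable_zetaSeries hs).tsum_pos (fun n => by positivity) 0 (by norm_num)

lemma zetaSeries_two : zetaSeries 2 = π ^ 2 / 6 := by
  simpa [zetaSeries] using ((hasSum_nat_add_iff' 1).2 hasSum_zeta_two).tsum_eq

lemma image_exp_neg_Ioi_zero : (fun x : ℝ => exp (-x)) '' Ioi 0 = Ioo 0 1 := by
  ext y
  constructor
  · rintro ⟨x, hx, rfl⟩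
    exact ⟨exp_pos _, by simpa using hx⟩
  · rintro ⟨h0, h1⟩
    exact ⟨-log y, by simpa using log_neg h0 h1, by simp [exp_log h0]⟩

lemma integral_pow_mul_neg_log_pow (n k : ℕ) :
    ∫ y in (0 : ℝ)..1, y ^ n * (-log y) ^ k = k.factorial / ((n : ℝ) + 1) ^ (k + 1) := by
  have gamma_integral : ∫ x in Ioi (0 : ℝ), x ^ k * exp (-((n + 1) * x)) =
      k.factorial / ((n : ℝ) + 1) ^ (k + 1) := by
    have h := integral_rpow_mul_exp_neg_mul_Ioi (a := (k : ℝ) + 1) (r := (n : ℝ) + 1)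
      (by positivity) (by positivity)
    rw [Gamma_nat_eq_factorial, ← Nat.cast_add_one k, rpow_natCast, div_pow, one_pow,
      one_div_mul_eq_div] at h
    simpa using h
  rw [intervalIntegral.integral_of_le zero_le_one, integral_Ioc_eq_integral_Ioo,
    ← image_exp_neg_Ioi_zero, integral_image_eq_integral_abs_deriv_smul
      (f' := fun x => -exp (-x)) measurableSet_Ioi, ← gamma_integral]
  · refine setIntegral_congr_fun measurableSet_Ioi fun x _ => ?_
    have : exp (-((n + 1) * x)) = exp (-x) * exp (-x) ^ n := by
      rw [← exp_nat_mul, ← exp_add]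
      ring_nf
    simp only [abs_neg, abs_exp, smul_eq_mul, log_exp, neg_neg, this]
    ring
  · intro x _
    simpa using ((hasDerivAt_id x).neg.exp).hasDerivWithinAt (s := Ioi 0)
  · intro x _ y _ h
    simpa using h

lemma intervalIntegrable_pow_mul_neg_log_pow (n k : ℕ) :
    IntervalIntegrable (fun y : ℝ => y ^ n * (-log y) ^ k) volume 0 1 :=
  intervalIntegral.intervalIntegrable_of_integral_ne_zero <| by
    rw [integral_pow_mul_neg_log_pow]
    positivity

lemma integral_neg_log_pow_div_one_sub {k : ℕ} (hk : k ≠ 0) :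
    ∫ y in (0 : ℝ)..1, (-log y) ^ k / (1 - y) = k.factorial * zetaSeries (k + 1) := by
  have moment (n : ℕ) : ∫ y in Ioo (0 : ℝ) 1, y ^ n * (-log y) ^ k =
      k.factorial * (1 / ((n : ℝ) + 1) ^ (k + 1)) := by
    rw [← integral_Ioc_eq_integral_Ioo, ← intervalIntegral.integral_of_le zero_le_one,
      integral_pow_mul_neg_log_pow, mul_one_div]
  have norm_moment (n : ℕ) : ∫ y in Ioo (0 : ℝ) 1, ‖y ^ n * (-log y) ^ k‖ =
      k.factorial * (1 / ((n : ℝ) + 1) ^ (k + 1)) := by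
    rw [← moment]
    refine setIntegral_congr_fun measurableSet_Ioo fun y hy => norm_of_nonneg ?_
    have := log_neg hy.1 hy.2
    exact mul_nonneg (pow_nonneg hy.1.le _) (pow_nonneg (by linarith) _)
  have hsum := hasSum_integral_of_summable_integral_norm
    (μ := volume.restrict (Ioo (0 : ℝ) 1)) (F := fun (n : ℕ) y => y ^ n * (-log y) ^ k)
    (fun n => (intervalIntegrable_iff_integrableOn_Ioo_of_le zero_le_one).1
      (intervalIntegrable_pow_mul_neg_log_pow n k))
    (by simpa only [norm_moment] using (summable_zetaSeries (by lia)).mul_left _)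
  rw [intervalIntegral.integral_of_le zero_le_one, integral_Ioc_eq_integral_Ioo, zetaSeries,
    ← tsum_mul_left, ← funext moment, hsum.tsum_eq]
  refine setIntegral_congr_fun measurableSet_Ioo fun y hy => ?_
  simp only [tsum_mul_right, tsum_geometric_of_lt_one hy.1.le hy.2]
  ring

lemma intervalIntegrable_neg_log_pow_div_one_sub {k : ℕ} (hk : k ≠ 0) :
    IntervalIntegrable (fun y : ℝ => (-log y) ^ k / (1 - y)) volume 0 1 :=
  intervalIntegral.intervalIntegrable_of_integral_ne_zero <| by
    rw [integral_neg_log_pow_div_one_sub hk]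
    have := zetaSeries_pos (s := k + 1) (by lia)
    positivity

lemma intervalIntegrable_neg_log_pow_div_one_add (k : ℕ) :
    IntervalIntegrable (fun y : ℝ => (-log y) ^ k / (1 + y)) volume 0 1 := by
  have h := (intervalIntegrable_pow_mul_neg_log_pow 0 k).mul_continuousOn
    (g := fun y => (1 + y)⁻¹) <| by
      rw [uIcc_of_le zero_le_one]
      exact ContinuousOn.inv₀ (by fun_prop) fun y hy => by linarith [hy.1]
  simpa [div_eq_mul_inv] using h

lemma integral_comp_sq_div (g : ℝ → ℝ) :
    ∫ x in (0 : ℝ)..1, g (x ^ 2) / x = (∫ y in (0 : ℝ)..1, g y / y) / 2 := by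
  have h := intervalIntegral.integral_comp_mul_deriv_of_deriv_nonneg (a := 0) (b := 1)
    (f := fun x : ℝ => x ^ 2) (f' := fun x => 2 * x) (g := fun y => g y / y) (by fun_prop)
    (fun x _ => by simpa using hasDerivAt_pow 2 x)
    (fun x hx => by rw [min_eq_left zero_le_one] at hx; linarith [hx.1])
  rw [zero_pow two_ne_zero, one_pow] at h
  rw [← h, ← intervalIntegral.integral_div]
  refine intervalIntegral.integral_congr fun x _ => ?_
  simp only [Function.comp_apply]
  field_simp

lemma integral_comp_one_sub_div_one_add_div (g : ℝ → ℝ) :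
    ∫ x in (0 : ℝ)..1, g ((1 - x) / (1 + x)) / x =
      ∫ y in (0 : ℝ)..1, (g y / (1 - y) + g y / (1 + y)) := by
  have one_add_ne {x : ℝ} (hx : 0 ≤ x) : 1 + x ≠ 0 := by positivity
  have h := intervalIntegral.integral_comp_mul_deriv_of_deriv_nonpos (a := 0) (b := 1)
    (f := fun x : ℝ => (1 - x) / (1 + x)) (f' := fun x => -(2 / (1 + x) ^ 2))
    (g := fun y => g y / (1 - y) + g y / (1 + y))
    (by
      rw [uIcc_of_le zero_le_one]
      exact ContinuousOn.div (by fun_prop) (by fun_prop) fun x hx => one_add_ne hx.1)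
    (fun x hx => by
      rw [min_eq_left zero_le_one] at hx
      have hx := one_add_ne hx.1.le
      convert! ((hasDerivAt_id x).const_sub 1).div ((hasDerivAt_id x).const_add 1) hx using 1
      simp only [id]
      field_simp
      ring)
    (fun x _ => neg_nonpos.2 (by positivity))
  simp only [sub_zero, add_zero, div_one, sub_self, zero_div] at h
  rw [intervalIntegral.integral_symm 0 1, ← neg_eq_iff_eq_neg] at h
  rw [← h, ← intervalIntegral.integral_neg]
  refine intervalIntegral.integral_congr_Ioo_of_le zero_le_one fun x hx => ?_
  have h0 := hx.1.ne'
  have h1 := one_add_ne hx.1.le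
  have h2 : 1 - (1 - x) / (1 + x) = 2 * x / (1 + x) := by field_simp; ring
  have h3 : 1 + (1 - x) / (1 + x) = 2 / (1 + x) := by field_simp; ring
  simp only [Function.comp_apply, h2, h3]
  field_simp

lemma integral_neg_log_pow_div_one_add {k : ℕ} (hk : k ≠ 0) :
    ∫ y in (0 : ℝ)..1, (-log y) ^ k / (1 + y) =
      (1 - 1 / 2 ^ k) * (k.factorial * zetaSeries (k + 1)) := by
  have hsub := intervalIntegrable_neg_log_pow_div_one_sub hk
  have hadd := intervalIntegrable_neg_log_pow_div_one_add k
  -- The substitution `y = x²` and partial fractions express the integral through itself.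
  have h : ∫ y in (0 : ℝ)..1, (-log y) ^ k / (1 - y) =
      2 ^ k * ((∫ y in (0 : ℝ)..1, (-log y) ^ k / (1 - y)) -
        ∫ y in (0 : ℝ)..1, (-log y) ^ k / (1 + y)) := by
    calc ∫ y in (0 : ℝ)..1, (-log y) ^ k / (1 - y)
        = ∫ y in (0 : ℝ)..1, y * (-log y) ^ k / (1 - y) / y := by
          refine intervalIntegral.integral_congr_Ioo_of_le zero_le_one fun y hy => ?_
          have := hy.1.ne'
          field_simp
      _ = 2 * ∫ x in (0 : ℝ)..1, x ^ 2 * (-log (x ^ 2)) ^ k / (1 - x ^ 2) / x := by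
          rw [integral_comp_sq_div fun y => y * (-log y) ^ k / (1 - y)]
          ring
      _ = 2 ^ k * ∫ x in (0 : ℝ)..1, ((-log x) ^ k / (1 - x) - (-log x) ^ k / (1 + x)) := by
          simp_rw [← intervalIntegral.integral_const_mul]
          refine intervalIntegral.integral_congr_Ioo_of_le zero_le_one fun x hx => ?_
          have hx1 : 1 - x ≠ 0 := by linarith [hx.2]
          have hx2 : 1 + x ≠ 0 := by linarith [hx.1]
          simp only [log_pow, Nat.cast_ofNat, ← mul_neg, mul_pow,
            show 1 - x ^ 2 = (1 - x) * (1 + x) by ring]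
          field_simp
          ring
      _ = _ := by rw [intervalIntegral.integral_sub hsub hadd]
  rw [integral_neg_log_pow_div_one_sub hk] at h
  field_simp at h ⊢
  linarith

lemma integral_neg_log_one_sub_pow_div {k : ℕ} (hk : k ≠ 0) :
    ∫ x in (0 : ℝ)..1, (-log (1 - x)) ^ k / x = k.factorial * zetaSeries (k + 1) := by
  have h := intervalIntegral.integral_comp_sub_left (a := 0) (b := 1)
    (fun y => (-log y) ^ k / (1 - y)) 1
  simpa [integral_neg_log_pow_div_one_sub hk] using h

lemma intervalIntegrable_neg_log_one_sub_pow_div {k : ℕ} (hk : k ≠ 0) :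
    IntervalIntegrable (fun x : ℝ => (-log (1 - x)) ^ k / x) volume 0 1 :=
  intervalIntegral.intervalIntegrable_of_integral_ne_zero <| by
    rw [integral_neg_log_one_sub_pow_div hk]
    have := zetaSeries_pos (s := k + 1) (by lia)
    positivity

lemma integral_neg_log_one_sub_sq_pow_div {k : ℕ} (hk : k ≠ 0) :
    ∫ x in (0 : ℝ)..1, (-log (1 - x ^ 2)) ^ k / x = k.factorial * zetaSeries (k + 1) / 2 := by
  rw [integral_comp_sq_div fun y => (-log (1 - y)) ^ k, integral_neg_log_one_sub_pow_div hk]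

lemma intervalIntegrable_neg_log_one_sub_sq_pow_div {k : ℕ} (hk : k ≠ 0) :
    IntervalIntegrable (fun x : ℝ => (-log (1 - x ^ 2)) ^ k / x) volume 0 1 :=
  intervalIntegral.intervalIntegrable_of_integral_ne_zero <| by
    rw [integral_neg_log_one_sub_sq_pow_div hk]
    have := zetaSeries_pos (s := k + 1) (by lia)
    positivity

lemma log_one_sub_div_one_add {x : ℝ} (hx : x ∈ Ioo (-1) 1) :
    log ((1 - x) / (1 + x)) = log (1 - x) - log (1 + x) :=
  log_div (by linarith [hx.2]) (by linarith [hx.1])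

lemma integral_log_one_add_sub_log_one_sub_pow_div {k : ℕ} (hk : k ≠ 0) :
    ∫ x in (0 : ℝ)..1, (log (1 + x) - log (1 - x)) ^ k / x =
      (2 - 1 / 2 ^ k) * (k.factorial * zetaSeries (k + 1)) := by
  calc ∫ x in (0 : ℝ)..1, (log (1 + x) - log (1 - x)) ^ k / x
      = ∫ x in (0 : ℝ)..1, (-log ((1 - x) / (1 + x))) ^ k / x := by
        refine intervalIntegral.integral_congr_Ioo_of_le zero_le_one fun x hx => ?_
        simp only [log_one_sub_div_one_add (Ioo_subset_Ioo_left neg_one_lt_zero.le hx), neg_sub]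
    _ = (∫ y in (0 : ℝ)..1, (-log y) ^ k / (1 - y)) +
          ∫ y in (0 : ℝ)..1, (-log y) ^ k / (1 + y) := by
        rw [integral_comp_one_sub_div_one_add_div fun y => (-log y) ^ k,
          intervalIntegral.integral_add (intervalIntegrable_neg_log_pow_div_one_sub hk)
            (intervalIntegrable_neg_log_pow_div_one_add k)]
    _ = _ := by
        rw [integral_neg_log_pow_div_one_sub hk, integral_neg_log_pow_div_one_add hk]
        ring

lemma intervalIntegrable_log_one_add_sub_log_one_sub_pow_div {k : ℕ} (hk : k ≠ 0) :
    IntervalIntegrable (fun x : ℝ => (log (1 + x) - log (1 - x)) ^ k / x) volume 0 1 :=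
  intervalIntegral.intervalIntegrable_of_integral_ne_zero <| by
    rw [integral_log_one_add_sub_log_one_sub_pow_div hk]
    have hpos := zetaSeries_pos (s := k + 1) (by lia)
    have : 1 / (2 : ℝ) ^ k ≤ 1 := div_le_one_of_le₀ (one_le_pow₀ one_le_two) (by positivity)
    have : 0 < 2 - 1 / (2 : ℝ) ^ k := by linarith
    positivity

lemma neg_log_one_sub_sq {x : ℝ} (hx : x ∈ Ioo (-1) 1) :
    -log (1 - x ^ 2) = -log (1 - x) - log (1 + x) := by
  rw [show 1 - x ^ 2 = (1 - x) * (1 + x) by ring,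
    log_mul (by linarith [hx.2]) (by linarith [hx.1]), neg_add']

lemma log_one_add_sq_div_eq {x : ℝ} (hx : x ∈ Ioo (-1) 1) :
    log (1 + x) ^ 2 / x = ((-log (1 - x ^ 2)) ^ 2 / x + (log (1 + x) - log (1 - x)) ^ 2 / x) / 2 -
      (-log (1 - x)) ^ 2 / x := by
  rw [neg_log_one_sub_sq hx]
  ring

lemma intervalIntegrable_log_one_add_sq_div :
    IntervalIntegrable (fun x : ℝ => log (1 + x) ^ 2 / x) volume 0 1 :=
  IntervalIntegrable.congr_uIoo
    ((((intervalIntegrable_neg_log_one_sub_sq_pow_div two_ne_zero).add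
      (intervalIntegrable_log_one_add_sub_log_one_sub_pow_div two_ne_zero)).div_const 2).sub
      (intervalIntegrable_neg_log_one_sub_pow_div two_ne_zero))
    fun _ hx => (log_one_add_sq_div_eq (uIoo_subset_Ioo (by simp) (by simp) hx)).symm

lemma integral_log_one_add_sq_div :
    ∫ x in (0 : ℝ)..1, log (1 + x) ^ 2 / x = zetaSeries 3 / 4 := by
  have hsq := intervalIntegrable_neg_log_one_sub_sq_pow_div two_ne_zero
  have hdiff := intervalIntegrable_log_one_add_sub_log_one_sub_pow_div two_ne_zero
  rw [intervalIntegral.integral_congr_Ioo_of_le zero_le_one fun _ hx =>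
      log_one_add_sq_div_eq (Ioo_subset_Ioo_left neg_one_lt_zero.le hx),
    intervalIntegral.integral_sub ((hsq.add hdiff).div_const 2)
      (intervalIntegrable_neg_log_one_sub_pow_div two_ne_zero),
    intervalIntegral.integral_div, intervalIntegral.integral_add hsq hdiff,
    integral_neg_log_one_sub_sq_pow_div two_ne_zero,
    integral_log_one_add_sub_log_one_sub_pow_div two_ne_zero,
    integral_neg_log_one_sub_pow_div two_ne_zero]
  simp only [Nat.factorial_two, Nat.cast_ofNat, Nat.reduceAdd]
  ring

lemma log_one_sub_mul_log_one_add_div_eq {x : ℝ} (hx : x ∈ Ioo (-1) 1) :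
    log (1 - x) * log (1 + x) / x =
      ((-log (1 - x ^ 2)) ^ 2 / x - (log (1 + x) - log (1 - x)) ^ 2 / x) / 4 := by
  rw [neg_log_one_sub_sq hx]
  ring

lemma intervalIntegrable_log_one_sub_mul_log_one_add_div :
    IntervalIntegrable (fun x : ℝ => log (1 - x) * log (1 + x) / x) volume 0 1 :=
  IntervalIntegrable.congr_uIoo
    (((intervalIntegrable_neg_log_one_sub_sq_pow_div two_ne_zero).sub
      (intervalIntegrable_log_one_add_sub_log_one_sub_pow_div two_ne_zero)).div_const 4)
    fun _ hx => (log_one_sub_mul_log_one_add_div_eq (uIoo_subset_Ioo (by simp) (by simp) hx)).symm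

lemma integral_log_one_sub_mul_log_one_add_div :
    ∫ x in (0 : ℝ)..1, log (1 - x) * log (1 + x) / x = -(5 / 8 * zetaSeries 3) := by
  rw [intervalIntegral.integral_congr_Ioo_of_le zero_le_one
      fun _ hx => log_one_sub_mul_log_one_add_div_eq (Ioo_subset_Ioo_left neg_one_lt_zero.le hx),
    intervalIntegral.integral_div,
    intervalIntegral.integral_sub (intervalIntegrable_neg_log_one_sub_sq_pow_div two_ne_zero)
      (intervalIntegrable_log_one_add_sub_log_one_sub_pow_div two_ne_zero),
    integral_neg_log_one_sub_sq_pow_div two_ne_zero,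
    integral_log_one_add_sub_log_one_sub_pow_div two_ne_zero]
  simp only [Nat.factorial_two, Nat.cast_ofNat, Nat.reduceAdd]
  ring

lemma continuousOn_log_one_add : ContinuousOn (fun x : ℝ => log (1 + x)) (Ioi (-1)) :=
  ContinuousOn.log (by fun_prop) fun x hx => by linarith [mem_Ioi.1 hx]

lemma hasDerivAt_log_one_add {x : ℝ} (hx : -1 < x) :
    HasDerivAt (fun x => log (1 + x)) (1 / (1 + x)) x :=
  ((hasDerivAt_id x).const_add 1).log (by simp only [id]; linarith)

lemma uIcc_zero_one_subset_Ioi_neg_one : uIcc (0 : ℝ) 1 ⊆ Ioi (-1) := by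
  rw [uIcc_of_le zero_le_one]
  exact fun x hx => neg_one_lt_zero.trans_le hx.1

lemma continuousOn_log_one_add_sq_mul_log :
    ContinuousOn (fun x : ℝ => log (1 + x) ^ 2 * log x) (Ioi (-1)) := by
  -- A factor `x` split off from `log (1 + x) ^ 2` tames `log x` at `0`.
  have hslope : ContinuousOn (dslope (fun x : ℝ => log (1 + x)) 0) (Ioi (-1)) :=
    (continuousOn_dslope (Ioi_mem_nhds neg_one_lt_zero)).2
      ⟨continuousOn_log_one_add, (hasDerivAt_log_one_add neg_one_lt_zero).differentiableAt⟩
  refine ((hslope.mul continuousOn_log_one_add).mul continuous_mul_log.continuousOn).congr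
    fun x _ => ?_
  have : x * dslope (fun x : ℝ => log (1 + x)) 0 x = log (1 + x) := by
    simpa using sub_smul_dslope (fun x : ℝ => log (1 + x)) 0 x
  simp only [Pi.mul_apply]
  linear_combination (-log (1 + x) * log x) * this

lemma intervalIntegrable_neg_log_mul_log_one_add_div_one_add :
    IntervalIntegrable (fun y : ℝ => -log y * log (1 + y) / (1 + y)) volume 0 1 := by
  have h := (intervalIntegrable_neg_log_pow_div_one_add 1).mul_continuousOn
    (continuousOn_log_one_add.mono uIcc_zero_one_subset_Ioi_neg_one)
  simpa only [pow_one, div_mul_eq_mul_div] using h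

lemma intervalIntegrable_neg_log_mul_log_one_add_div_one_sub :
    IntervalIntegrable (fun y : ℝ => -log y * log (1 + y) / (1 - y)) volume 0 1 := by
  have h := (intervalIntegrable_neg_log_pow_div_one_sub one_ne_zero).mul_continuousOn
    (continuousOn_log_one_add.mono uIcc_zero_one_subset_Ioi_neg_one)
  simpa only [pow_one, div_mul_eq_mul_div] using h

lemma integral_neg_log_mul_log_one_add_div_one_add :
    ∫ y in (0 : ℝ)..1, -log y * log (1 + y) / (1 + y) = zetaSeries 3 / 8 := by
  have hlog := intervalIntegrable_neg_log_mul_log_one_add_div_one_add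
  have hderiv (y : ℝ) (hy : y ∈ Ioo 0 1) : HasDerivAt (fun y => log (1 + y) ^ 2 * log y)
      (log (1 + y) ^ 2 / y - 2 * (-log y * log (1 + y) / (1 + y))) y := by
    convert! ((hasDerivAt_log_one_add (neg_one_lt_zero.trans hy.1)).pow 2).mul
      (hasDerivAt_log hy.1.ne') using 1
    simp only [Pi.pow_apply]
    ring
  have h := intervalIntegral.integral_eq_sub_of_hasDerivAt_of_le zero_le_one
    (continuousOn_log_one_add_sq_mul_log.mono
      (uIcc_of_le (zero_le_one' ℝ) ▸ uIcc_zero_one_subset_Ioi_neg_one)) hderiv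
    (intervalIntegrable_log_one_add_sq_div.sub (hlog.const_mul 2))
  rw [intervalIntegral.integral_sub intervalIntegrable_log_one_add_sq_div (hlog.const_mul 2),
    intervalIntegral.integral_const_mul, integral_log_one_add_sq_div] at h
  simp only [log_one, log_zero, mul_zero, sub_zero] at h
  linarith

lemma neg_log_pow_one_div_one_sub (y : ℝ) : (-log y) ^ 1 / (1 - y) = log y / (y - 1) := by
  rw [pow_one, ← neg_sub y 1, neg_div_neg_eq]

lemma integral_log_div_sub_one : ∫ y in (0 : ℝ)..1, log y / (y - 1) = π ^ 2 / 6 := by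
  simpa only [neg_log_pow_one_div_one_sub, Nat.factorial_one, Nat.cast_one, one_mul,
    one_add_one_eq_two, zetaSeries_two] using integral_neg_log_pow_div_one_sub one_ne_zero

lemma intervalIntegrable_log_div_sub_one :
    IntervalIntegrable (fun y : ℝ => log y / (y - 1)) volume 0 1 := by
  simpa only [neg_log_pow_one_div_one_sub] using
    intervalIntegrable_neg_log_pow_div_one_sub one_ne_zero

lemma integral_log_one_add_mul_log_div_sub_one :
    ∫ y in (0 : ℝ)..1, log (1 + y) * (log y / (y - 1)) =
      π ^ 2 / 4 * log 2 - zetaSeries 3 := by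
  have hsub := intervalIntegrable_neg_log_mul_log_one_add_div_one_sub
  have hadd := intervalIntegrable_neg_log_mul_log_one_add_div_one_add
  have hdiff := (intervalIntegrable_log_one_add_sub_log_one_sub_pow_div one_ne_zero).const_mul
    (log 2)
  have hsq := intervalIntegrable_log_one_add_sq_div
  have hprod := intervalIntegrable_log_one_sub_mul_log_one_add_div
  have cayley (x : ℝ) (hx : x ∈ Ioo 0 1) :
      -log ((1 - x) / (1 + x)) * log (1 + (1 - x) / (1 + x)) / x =
        log 2 * ((log (1 + x) - log (1 - x)) ^ 1 / x) - log (1 + x) ^ 2 / x +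
          log (1 - x) * log (1 + x) / x := by
    have hne : 1 + x ≠ 0 := by linarith [hx.1]
    rw [log_one_sub_div_one_add (Ioo_subset_Ioo_left neg_one_lt_zero.le hx),
      show 1 + (1 - x) / (1 + x) = 2 / (1 + x) by field_simp; ring, log_div two_ne_zero hne]
    ring
  have h := integral_comp_one_sub_div_one_add_div fun y => -log y * log (1 + y)
  rw [intervalIntegral.integral_congr_Ioo_of_le zero_le_one cayley,
    intervalIntegral.integral_add (hdiff.sub hsq) hprod, intervalIntegral.integral_sub hdiff hsq,
    intervalIntegral.integral_const_mul,
    integral_log_one_add_sub_log_one_sub_pow_div one_ne_zero, integral_log_one_add_sq_div,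
    integral_log_one_sub_mul_log_one_add_div, intervalIntegral.integral_add hsub hadd,
    integral_neg_log_mul_log_one_add_div_one_add] at h
  have : ∫ y in (0 : ℝ)..1, log (1 + y) * (log y / (y - 1)) =
      ∫ y in (0 : ℝ)..1, -log y * log (1 + y) / (1 - y) := by
    congr with y
    rw [← neg_log_pow_one_div_one_sub]
    ring
  rw [this]
  simp only [Nat.factorial_one, Nat.cast_one, one_add_one_eq_two, zetaSeries_two] at h
  linarith

lemma integral_mul_integral_eq_sub {a b : ℝ} {F f w : ℝ → ℝ} (hF : ContinuousOn F (uIcc a b))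
    (hFf : ∀ x ∈ uIoo a b, HasDerivAt F (f x) x) (hf : IntervalIntegrable f volume a b)
    (hw : IntervalIntegrable w volume a b) (hwc : ContinuousOn w (uIoo a b)) :
    ∫ x in a..b, f x * ∫ y in a..x, w y = F b * (∫ y in a..b, w y) - ∫ y in a..b, F y * w y := by
  have hprim (x : ℝ) (hx : x ∈ uIoo a b) : HasDerivAt (fun x => ∫ y in a..x, w y) (w x) x :=
    intervalIntegral.integral_hasDerivAt_right
      (hw.mono_set (uIcc_subset_uIcc left_mem_uIcc (uIoo_subset_uIcc_self hx)))
      (hwc.stronglyMeasurableAtFilter isOpen_Ioo x hx)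
      (hwc.continuousAt (isOpen_Ioo.mem_nhds hx))
  simpa [mul_comm] using intervalIntegral.integral_mul_deriv_eq_deriv_mul_of_hasDerivAt
    (intervalIntegral.continuousOn_primitive_interval' hw left_mem_uIcc) hF hprim hFf hw hf

lemma hasDerivAt_sub_one_sq_div_two_add_log_one_add {x : ℝ} (hx : -1 < x) :
    HasDerivAt (fun x => (x - 1) ^ 2 / 2 + log (1 + x)) (x ^ 2 / (1 + x)) x := by
  have hne : 1 + x ≠ 0 := by linarith
  convert! ((((hasDerivAt_id x).sub_const 1).pow 2).div_const 2).add
    (hasDerivAt_log_one_add hx) using 1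
  simp only [id]
  field_simp
  ring

lemma integral_sub_one_sq_div_two_add_log_one_add_mul_log_div_sub_one :
    ∫ y in (0 : ℝ)..1, ((y - 1) ^ 2 / 2 + log (1 + y)) * (log y / (y - 1)) =
      3 / 8 + (π ^ 2 / 4 * log 2 - zetaSeries 3) := by
  have h0 := intervalIntegrable_pow_mul_neg_log_pow 0 1
  have h1 := intervalIntegrable_pow_mul_neg_log_pow 1 1
  have hlog := intervalIntegrable_log_div_sub_one.continuousOn_mul
    (continuousOn_log_one_add.mono uIcc_zero_one_subset_Ioi_neg_one)
  rw [intervalIntegral.integral_congr_Ioo_of_le (g := fun y =>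
      (y ^ 0 * (-log y) ^ 1 - y ^ 1 * (-log y) ^ 1) / 2 + log (1 + y) * (log y / (y - 1)))
      zero_le_one fun y hy => ?_,
    intervalIntegral.integral_add ((h0.sub h1).div_const 2) hlog,
    intervalIntegral.integral_div, intervalIntegral.integral_sub h0 h1,
    integral_pow_mul_neg_log_pow, integral_pow_mul_neg_log_pow,
    integral_log_one_add_mul_log_div_sub_one]
  · norm_num
  · have : y - 1 ≠ 0 := by linarith [hy.2]
    field_simp
    ring

/-- `∫₀¹ (x²/(1+x))·(∫₀ˣ log(y)/(y−1) dy) dx = (−4·log(2)·π²/6 + 8ζ(3) − 3)/8`. -/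
theorem integral_dilog_kernel_two :
    ∫ x in (0:ℝ)..1, (x ^ 2 / (1 + x)) * (∫ y in (0:ℝ)..x, Real.log y / (y - 1)) =
      (-4 * Real.log 2 * (π ^ 2 / 6) + 8 * (∑' k : ℕ, 1 / ((k : ℝ) + 1) ^ 3) - 3) / 8 := by
  have unit_sub := uIcc_zero_one_subset_Ioi_neg_one
  have hderiv (x : ℝ) (hx : x ∈ uIcc 0 1) :=
    hasDerivAt_sub_one_sq_div_two_add_log_one_add (unit_sub hx)
  have hf : ContinuousOn (fun x : ℝ => x ^ 2 / (1 + x)) (uIcc 0 1) :=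
    ContinuousOn.div (by fun_prop) (by fun_prop) fun x hx => by linarith [mem_Ioi.1 (unit_sub hx)]
  have hw : ContinuousOn (fun y : ℝ => log y / (y - 1)) (uIoo 0 1) := by
    rw [uIoo_of_le zero_le_one]
    exact ContinuousOn.div (continuousOn_log.mono fun y hy => hy.1.ne') (by fun_prop)
      fun y hy => by linarith [hy.2]
  rw [integral_mul_integral_eq_sub (HasDerivAt.continuousOn hderiv)
      (fun x hx => hderiv x (uIoo_subset_uIcc_self hx)) hf.intervalIntegrable
      intervalIntegrable_log_div_sub_one hw,
    integral_log_div_sub_one, integral_sub_one_sq_div_two_add_log_one_add_mul_log_div_sub_one,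
    zetaSeries, sub_self, one_add_one_eq_two]
  ring
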